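/- Let (X,f) be a topological dynamical system, μ an f-invariant ergodic Borel probability measure, φ: X → ℝ a continuous potential, g a mistake function (for a finite partition Q), and Q a finite measurable partition. Then for μ-almost every x, limsup_{n→∞} (1/n) log [ Σ_{j=0}^{R_n(g;x,Q)} e^{S_nφ(f^j(x))} ] ≤ h_μ(f,Q) + c_{φ,1}, where c_{φ,1} = limsup_{n→∞} (1/n) log ∫ e^{S_nφ} dμ is the free energy and S_nφ = Σ_{i=0}^{n−1} φ∘fⁱ. -/

import Mathlib

open Filter MeasureTheory Set Topology
open scoped ENNReal

/-- A *mistake function* `g : ℕ × (0,∞) → ℕ`: nondecreasing in `n` and sublinear in `n`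
for every scale `ε > 0`. -/
structure IsMistakeFunction (g : ℕ → ℝ → ℕ) : Prop where
  mono : ∀ ε : ℝ, 0 < ε → ∀ n : ℕ, g n ε ≤ g (n + 1) ε
  sublinear : ∀ ε : ℝ, 0 < ε → Tendsto (fun n : ℕ => (g n ε : ℝ) / n) atTop (nhds 0)

/-- The mistake dynamical ball `B_n(g; x, ε)`. -/
def mistakeBall {X : Type*} [PseudoMetricSpace X] (f : X → X) (g : ℕ → ℝ → ℕ)
    (n : ℕ) (x : X) (ε : ℝ) : Set X :=
  {y | ∃ Λ : Finset ℕ, Λ ⊆ Finset.range n ∧ n - g n ε ≤ Λ.card ∧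
    ∀ i ∈ Λ, dist (f^[i] y) (f^[i] x) < ε}

/-- First return time `R_n(g; x, ε)` to the mistake dynamical ball. -/
noncomputable def mistakeReturn {X : Type*} [PseudoMetricSpace X] (f : X → X)
    (g : ℕ → ℝ → ℕ) (n : ℕ) (x : X) (ε : ℝ) : ℕ :=
  sInf {k : ℕ | 1 ≤ k ∧ f^[k] x ∈ mistakeBall f g n x ε}

/-- Minimal return time `S_n(g; x, ε)` of the mistake dynamical ball to itself. -/
noncomputable def mistakeMinReturn {X : Type*} [PseudoMetricSpace X] (f : X → X)
    (g : ℕ → ℝ → ℕ) (n : ℕ) (x : X) (ε : ℝ) : ℕ :=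
  sInf {k : ℕ | 1 ≤ k ∧
    (f^[k] ⁻¹' (mistakeBall f g n x ε) ∩ mistakeBall f g n x ε).Nonempty}

/-- `g`-almost specification at scale `ε`. -/
def AlmostSpecAt {X : Type*} [PseudoMetricSpace X] (f : X → X) (g : ℕ → ℝ → ℕ)
    (ε : ℝ) : Prop :=
  ∃ N : ℕ, 0 < N ∧ ∀ x y : X, ∀ n m : ℕ, N ≤ n → N ≤ m →
    (mistakeBall f g m y ε ∩ f^[m] ⁻¹' mistakeBall f g n x ε).Nonempty

/-- The `g`-almost specification property. -/
def AlmostSpec {X : Type*} [PseudoMetricSpace X] (f : X → X) (g : ℕ → ℝ → ℕ) : Prop :=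
  ∃ ε : ℝ, 0 < ε ∧ AlmostSpecAt f g ε

/-- Static entropy `H_μ(Q^{(n)})` of the refined partition `Q^{(n)} = ⋁_{i<n} f⁻ⁱQ`,
where the finite partition `Q` is encoded by a map `P : X → Fin m`. -/
noncomputable def refinedEntropy {X : Type*} [MeasurableSpace X] (μ : Measure X)
    (f : X → X) {m : ℕ} (P : X → Fin m) (n : ℕ) : ℝ :=
  ∑ a : Fin n → Fin m, Real.negMulLog (μ {x | ∀ i : Fin n, P (f^[(i : ℕ)] x) = a i}).toReal

/-- The measure-theoretic entropy `h_μ(f, Q)` of `μ` relative to the finite partition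
encoded by `P : X → Fin m`, defined (via subadditivity) as `inf_n H_μ(Q^{(n)})/n`. -/
noncomputable def partitionEntropy {X : Type*} [MeasurableSpace X] (μ : Measure X)
    (f : X → X) {m : ℕ} (P : X → Fin m) : ℝ :=
  ⨅ n : ℕ, refinedEntropy μ f P (n + 1) / (n + 1)

/-- The Kolmogorov–Sinai entropy `h_μ(f)`: the supremum, over all finite measurable
partitions, of the entropy relative to the partition. -/
noncomputable def ksEntropy {X : Type*} [MeasurableSpace X] (μ : Measure X)
    (f : X → X) : ℝ≥0∞ :=
  ⨆ (m : ℕ) (P : X → Fin m) (_ : Measurable P), ENNReal.ofReal (partitionEntropy μ f P)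

/-- The mistake "partition element" `Q_g^{(n)}(x) = ⋃_{Λ ∈ I(g;n,Q)} Q^{(n)}_Λ(x)`, for a
finite partition encoded by `P : X → Fin m` and a mistake function `g : ℕ → ℕ` for the
partition. -/
def mistakeCylinder {X : Type*} (f : X → X) {m : ℕ} (P : X → Fin m) (g : ℕ → ℕ)
    (n : ℕ) (x : X) : Set X :=
  {y | ∃ Λ : Finset ℕ, Λ ⊆ Finset.range n ∧ n - g n ≤ Λ.card ∧
    ∀ j ∈ Λ, P (f^[j] y) = P (f^[j] x)}

/-- First return time `R_n(g, x, Q)` of `x` to the mistake partition element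
`Q_g^{(n)}(x)`. -/
noncomputable def cylReturn {X : Type*} (f : X → X) {m : ℕ} (P : X → Fin m) (g : ℕ → ℕ)
    (n : ℕ) (x : X) : ℕ :=
  sInf {k : ℕ | 1 ≤ k ∧ f^[k] x ∈ mistakeCylinder f P g n x}

/-- Minimal return time `S_n(g, x, Q)` of the set `Q_g^{(n)}(x)` to itself. -/
noncomputable def cylMinReturn {X : Type*} (f : X → X) {m : ℕ} (P : X → Fin m) (g : ℕ → ℕ)
    (n : ℕ) (x : X) : ℕ :=
  sInf {k : ℕ | 1 ≤ k ∧
    (f^[k] ⁻¹' (mistakeCylinder f P g n x) ∩ mistakeCylinder f P g n x).Nonempty}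

/-!
Fix `b` larger than the entropy of the partition. The conditional probabilities of a letter given
the next `k` letters define Markov weights on words of length `k + n` whose sum is at most the
number of words of length `k`. By the ergodic theorem the weight of the `(k + n)`-word of almost
every point is eventually at least `exp (-n a)`, where `a < b` exceeds the increment
`H_{k+1} - H_k`, so that at most `const * exp (n a)` words matter. A set of points that do not
come back within time `N` has `N + 1` disjoint preimages, hence each word contributes a set of
measure at most `exp (-n b)` of points that do not see that word again before time `exp (n b)`.
By Borel-Cantelli the exact return time, and with it the return time with mistakes, is eventually
at most `exp (n b)`. The weighted sum up to that time has integral about `exp (n b)` times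
`∫ exp (S_n φ)`, and Markov's inequality together with Borel-Cantelli finishes the proof.
-/

section LimsupLogDiv

variable {u : ℕ → ℝ} {b K : ℝ}

theorem log_div_natCast_le_of_le_exp {x : ℝ} {n : ℕ} (hn : 0 < n) (hx : 0 < x)
    (h : x ≤ Real.exp (n * b)) : Real.log x / n ≤ b := by
  rw [div_le_iff₀ (Nat.cast_pos.2 hn), mul_comm]
  exact (Real.log_le_iff_le_exp hx).2 h

theorem eventually_le_exp_of_limsup_log_div_lt (hu : ∀ n, 0 < u n)
    (hK : ∀ n : ℕ, u n ≤ Real.exp (n * K))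
    (hb : limsup (fun n : ℕ => Real.log (u n) / n) atTop < b) :
    ∀ᶠ n : ℕ in atTop, u n ≤ Real.exp (n * b) := by
  have hbdd : IsBoundedUnder (· ≤ ·) atTop fun n : ℕ => Real.log (u n) / n := by
    refine ⟨K, eventually_map.2 ?_⟩
    filter_upwards [eventually_gt_atTop 0] with n hn
    exact log_div_natCast_le_of_le_exp hn (hu n) (hK n)
  filter_upwards [eventually_lt_of_limsup_lt hb hbdd, eventually_gt_atTop 0] with n hlt hn
  rw [div_lt_iff₀ (Nat.cast_pos.2 hn), mul_comm, Real.log_lt_iff_lt_exp (hu n)] at hlt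
  exact hlt.le

theorem limsup_log_div_le (hK : ∀ n : ℕ, Real.exp (-(n * K)) ≤ u n)
    (hb : ∀ᶠ n : ℕ in atTop, u n ≤ Real.exp (n * b)) :
    limsup (fun n : ℕ => Real.log (u n) / n) atTop ≤ b := by
  have hu : ∀ n, 0 < u n := fun n => (Real.exp_pos _).trans_le (hK n)
  have hcobdd : IsCoboundedUnder (· ≤ ·) atTop fun n : ℕ => Real.log (u n) / n := by
    refine IsBoundedUnder.isCoboundedUnder_le ⟨-K, eventually_map.2 ?_⟩
    filter_upwards [eventually_gt_atTop 0] with n hn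
    change -K ≤ _
    rw [le_div_iff₀ (Nat.cast_pos.2 hn), Real.le_log_iff_exp_le (hu n)]
    convert hK n using 2
    ring
  refine limsup_le_of_le hcobdd ?_
  filter_upwards [hb, eventually_gt_atTop 0] with n hle hn
  exact log_div_natCast_le_of_le_exp hn (hu n) hle

end LimsupLogDiv

section MeasureTheoreticPreliminaries

variable {X : Type*} [MeasurableSpace X] {μ : Measure X}

theorem ae_le_const_of_forall_gt {β : Type*} [LinearOrder β] [DenselyOrdered β]
    [TopologicalSpace β] [OrderTopology β] [FirstCountableTopology β] {F : X → β} {c : β}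
    (h : ∀ b > c, ∀ᵐ x ∂μ, F x ≤ b) : ∀ᵐ x ∂μ, F x ≤ c := by
  refine eventually_le_const_iff_forall_gt_eventually_lt_const.2 fun b hb => ?_
  obtain ⟨b', hcb', hb'b⟩ := exists_between hb
  exact (h b' hcb').mono fun x hx => hx.trans_lt hb'b

theorem ae_eventually_notMem_of_measureReal_le_exp [IsFiniteMeasure μ] {s : ℕ → Set X} {C ε : ℝ}
    (hε : 0 < ε) (h : ∀ᶠ n : ℕ in atTop, μ.real (s n) ≤ C * Real.exp (-(n * ε))) :
    ∀ᵐ x ∂μ, ∀ᶠ n in atTop, x ∉ s n := by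
  have hexp : Summable fun n : ℕ => Real.exp (-(n * ε)) := by
    simpa only [mul_neg] using Real.summable_exp_nat_mul_iff.2 (neg_lt_zero.2 hε)
  have hs : Summable fun n => μ.real (s n) := by
    refine (hexp.mul_left C).of_norm_bounded_eventually_nat ?_
    filter_upwards [h] with n hn
    rwa [Real.norm_of_nonneg measureReal_nonneg]
  refine ae_eventually_notMem ?_
  simp_rw [fun n => (ofReal_measureReal (μ := μ) (s := s n)).symm]
  rw [← ENNReal.ofReal_tsum_of_nonneg (fun _ => measureReal_nonneg) hs]
  exact ENNReal.ofReal_ne_top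

theorem integral_comp_eq_of_measurePreserving {Y E : Type*} [MeasurableSpace Y]
    [NormedAddCommGroup E] [NormedSpace ℝ E] {ν : Measure Y} {f : X → Y}
    (hf : MeasurePreserving f μ ν) {g : Y → E} (hg : AEStronglyMeasurable g ν) :
    ∫ x, g (f x) ∂μ = ∫ y, g y ∂ν := by
  rw [← hf.map_eq] at hg ⊢
  exact (integral_map hf.aemeasurable hg).symm

theorem nullMeasurableSet_bddAbove_range {ι β : Type*} [Countable ι] [LinearOrder β]
    [TopologicalSpace β] [OrderTopology β] [SecondCountableTopology β] [MeasurableSpace β]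
    [BorelSpace β] {F : ι → X → β} (hF : ∀ i, AEMeasurable (F i) μ) :
    NullMeasurableSet {x | BddAbove (range fun i => F i x)} μ := by
  have hmk : MeasurableSet {x | BddAbove (range fun i => (hF i).mk (F i) x)} :=
    measurableSet_bddAbove_range fun i => (hF i).measurable_mk
  refine hmk.nullMeasurableSet.congr ?_
  filter_upwards [ae_all_iff.2 fun i => (hF i).ae_eq_mk] with x hx
  exact congrArg (fun u : ι → β => BddAbove (range u)) (funext hx).symm

section FiniteValued

variable {β : Type*} [IsFiniteMeasure μ]

theorem integrable_comp_of_finite [Finite β] [MeasurableSpace β] [MeasurableSingletonClass β]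
    {E : Type*} [NormedAddCommGroup E] {Y : X → β} (hY : Measurable Y) (F : β → E) :
    Integrable (fun x => F (Y x)) μ :=
  (Integrable.of_finite (μ := μ.map Y) (f := F)).comp_measurable hY

theorem integral_comp_eq_sum_measureReal_preimage [Fintype β] [MeasurableSpace β]
    [MeasurableSingletonClass β] {E : Type*} [NormedAddCommGroup E] [NormedSpace ℝ E]
    [CompleteSpace E] {Y : X → β} (hY : Measurable Y) (F : β → E) :
    ∫ x, F (Y x) ∂μ = ∑ a, μ.real (Y ⁻¹' {a}) • F a := by
  rw [integral_comp_eq_of_measurePreserving (hY.measurePreserving μ)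
      AEStronglyMeasurable.of_discrete,
    integral_fintype .of_finite]
  simp only [map_measureReal_apply hY (measurableSet_singleton _)]

theorem ae_measureReal_preimage_singleton_pos [Finite β] (Y : X → β) :
    ∀ᵐ x ∂μ, 0 < μ.real (Y ⁻¹' {Y x}) := by
  have h : ∀ a, ∀ᵐ x ∂μ, Y x = a → μ (Y ⁻¹' {a}) ≠ 0 := by
    intro a
    rcases eq_or_ne (μ (Y ⁻¹' {a})) 0 with ha | ha
    · filter_upwards [measure_eq_zero_iff_ae_notMem.1 ha] with x hx hxa
      exact absurd hxa hx
    · exact .of_forall fun _ _ => ha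
  filter_upwards [ae_all_iff.2 h] with x hx
  exact ENNReal.toReal_pos (hx _ rfl) (measure_ne_top _ _)

end FiniteValued

end MeasureTheoreticPreliminaries

section BirkhoffSum

variable {X : Type*} {f : X → X}

theorem norm_birkhoffSum_le {E : Type*} [SeminormedAddCommGroup E] {F : X → E} {K : ℝ}
    (hF : ∀ x, ‖F x‖ ≤ K) (n : ℕ) (x : X) : ‖birkhoffSum f F n x‖ ≤ n * K := by
  calc ‖birkhoffSum f F n x‖ ≤ ∑ _i ∈ Finset.range n, K := norm_sum_le_of_le _ fun i _ => hF _
    _ = n * K := by rw [Finset.sum_const, Finset.card_range, nsmul_eq_mul]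

theorem birkhoffSum_mono_of_nonneg {M : Type*} [AddCommMonoid M] [PartialOrder M]
    [IsOrderedAddMonoid M] {w : X → M} (hw : ∀ x, 0 ≤ w x) {m n : ℕ} (h : m ≤ n) (x : X) :
    birkhoffSum f w m x ≤ birkhoffSum f w n x :=
  Finset.sum_le_sum_of_subset_of_nonneg (Finset.range_mono h) fun _ _ _ => hw _

variable [MeasurableSpace X] {μ : Measure X}

theorem measurable_birkhoffSum {M : Type*} [AddCommMonoid M] [MeasurableSpace M]
    [MeasurableAdd₂ M] {F : X → M} (hf : Measurable f) (hF : Measurable F) (n : ℕ) :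
    Measurable (birkhoffSum f F n) :=
  Finset.measurable_fun_sum _ fun i _ => hF.comp (hf.iterate i)

variable {E : Type*} [NormedAddCommGroup E] {F : X → E}

theorem integrable_birkhoffSum (hf : MeasurePreserving f μ μ) (hF : Integrable F μ) (n : ℕ) :
    Integrable (birkhoffSum f F n) μ :=
  integrable_finsetSum _ fun i _ => (hf.iterate i).integrable_comp_of_integrable hF

theorem integral_birkhoffSum [NormedSpace ℝ E] (hf : MeasurePreserving f μ μ)
    (hF : Integrable F μ) (n : ℕ) : ∫ x, birkhoffSum f F n x ∂μ = n • ∫ x, F x ∂μ := by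
  have hint : ∀ i, Integrable (fun x => F (f^[i] x)) μ := fun i =>
    (hf.iterate i).integrable_comp_of_integrable hF
  simp only [birkhoffSum]
  rw [integral_finsetSum _ fun i _ => hint i]
  simp only [integral_comp_eq_of_measurePreserving (hf.iterate _) hF.aestronglyMeasurable,
    Finset.sum_const, Finset.card_range]

end BirkhoffSum

section ErgodicTheorem

variable {X : Type*}

/-- The maximal function `max_{0 ≤ k ≤ n} S_k G` of the Birkhoff sums of `G` used in the maximal
ergodic theorem; it is nonnegative because `k = 0` is included. -/
def birkhoffMax (f : X → X) (G : X → ℝ) : ℕ →o (X → ℝ) :=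
  partialSups (birkhoffSum f G)

theorem birkhoffSum_le_birkhoffMax (f : X → X) (G : X → ℝ) (n : ℕ) (x : X) :
    birkhoffSum f G n x ≤ birkhoffMax f G n x :=
  le_partialSups (birkhoffSum f G) n x

theorem birkhoffMax_zero (f : X → X) (G : X → ℝ) : birkhoffMax f G 0 = 0 := by
  rw [birkhoffMax, partialSups_zero, birkhoffSum_zero']

theorem birkhoffMax_nonneg (f : X → X) (G : X → ℝ) (n : ℕ) (x : X) : 0 ≤ birkhoffMax f G n x := by
  have h : birkhoffMax f G 0 x ≤ birkhoffMax f G n x := (birkhoffMax f G).monotone n.zero_le x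
  rwa [birkhoffMax_zero] at h

theorem birkhoffMax_succ (f : X → X) (G : X → ℝ) (n : ℕ) (x : X) :
    birkhoffMax f G (n + 1) x = max (birkhoffMax f G n x) (birkhoffSum f G (n + 1) x) := by
  rw [birkhoffMax, partialSups_add_one, Pi.sup_apply]

theorem birkhoffMax_succ' (f : X → X) (G : X → ℝ) (n : ℕ) (x : X) :
    birkhoffMax f G (n + 1) x = max 0 (G x + birkhoffMax f G n (f x)) := by
  induction n with
  | zero => simp [birkhoffMax_succ, birkhoffMax_zero, birkhoffSum_one]
  | succ n ih =>
    rw [birkhoffMax_succ f G (n + 1), ih, birkhoffSum_succ', birkhoffMax_succ f G n (f x),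
      max_assoc, max_add_add_left]

theorem birkhoffMax_succ_sub_comp (f : X → X) (G : X → ℝ) (n : ℕ) (x : X) :
    birkhoffMax f G (n + 1) x - birkhoffMax f G n (f x) = max (-birkhoffMax f G n (f x)) (G x) := by
  rw [birkhoffMax_succ', ← max_sub_sub_right, zero_sub, add_sub_cancel_right]

theorem bddAbove_birkhoffMax_comp_iff (f : X → X) (G : X → ℝ) (x : X) :
    BddAbove (range fun n => birkhoffMax f G n (f x)) ↔
      BddAbove (range fun n => birkhoffMax f G n x) := by
  simp only [bddAbove_def, forall_mem_range]
  constructor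
  · rintro ⟨K, hK⟩
    refine ⟨max 0 (G x + K), fun n => ?_⟩
    calc birkhoffMax f G n x ≤ birkhoffMax f G (n + 1) x := (birkhoffMax f G).monotone n.le_succ x
      _ = max 0 (G x + birkhoffMax f G n (f x)) := birkhoffMax_succ' f G n x
      _ ≤ max 0 (G x + K) := by gcongr; exact hK n
  · rintro ⟨K, hK⟩
    refine ⟨K - G x, fun n => ?_⟩
    have := hK (n + 1)
    rw [birkhoffMax_succ'] at this
    linarith [(le_max_right _ _).trans this]

theorem tendsto_birkhoffMax_succ_sub_comp {f : X → X} {G : X → ℝ} {x : X}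
    (hx : ¬BddAbove (range fun n => birkhoffMax f G n x)) :
    Tendsto (fun n => birkhoffMax f G (n + 1) x - birkhoffMax f G n (f x)) atTop (𝓝 (G x)) := by
  rw [← bddAbove_birkhoffMax_comp_iff] at hx
  have hmono : Monotone fun n => birkhoffMax f G n (f x) :=
    fun _ _ hij => (birkhoffMax f G).monotone hij (f x)
  refine tendsto_const_nhds.congr' ?_
  filter_upwards [(tendsto_atTop_atTop_of_monotone' hmono hx).eventually_ge_atTop (-G x)] with n hn
  rw [birkhoffMax_succ_sub_comp, max_eq_right (by linarith)]

variable [MeasurableSpace X] {μ : Measure X} {f : X → X} {G : X → ℝ}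

theorem integrable_birkhoffMax (hf : MeasurePreserving f μ μ) (hG : Integrable G μ) (n : ℕ) :
    Integrable (birkhoffMax f G n) μ := by
  induction n with
  | zero => rw [birkhoffMax_zero]; exact integrable_zero X ℝ μ
  | succ n ih =>
    rw [birkhoffMax, partialSups_add_one]
    exact ih.sup (integrable_birkhoffSum hf hG (n + 1))

theorem integral_birkhoffMax_succ_sub_comp_nonneg (hf : MeasurePreserving f μ μ)
    (hG : Integrable G μ) (n : ℕ) :
    0 ≤ ∫ x, (birkhoffMax f G (n + 1) x - birkhoffMax f G n (f x)) ∂μ := by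
  have hint := integrable_birkhoffMax hf hG
  have hcomp : Integrable (fun x => birkhoffMax f G n (f x)) μ :=
    hf.integrable_comp_of_integrable (hint n)
  rw [integral_sub (hint (n + 1)) hcomp,
    integral_comp_eq_of_measurePreserving hf (hint n).aestronglyMeasurable, sub_nonneg]
  exact integral_mono (hint n) (hint (n + 1)) ((birkhoffMax f G).monotone n.le_succ)

theorem integral_nonneg_of_ae_not_bddAbove_birkhoffMax (hf : MeasurePreserving f μ μ)
    (hG : Integrable G μ) (h : ∀ᵐ x ∂μ, ¬BddAbove (range fun n => birkhoffMax f G n x)) :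
    0 ≤ ∫ x, G x ∂μ := by
  have hint := integrable_birkhoffMax hf hG
  have hmeas : ∀ n, AEStronglyMeasurable
      (fun x => birkhoffMax f G (n + 1) x - birkhoffMax f G n (f x)) μ := fun n =>
    ((hint (n + 1)).sub (hf.integrable_comp_of_integrable (hint n))).aestronglyMeasurable
  have hbound : ∀ n x, ‖birkhoffMax f G (n + 1) x - birkhoffMax f G n (f x)‖ ≤ |G x| := by
    intro n x
    have hM := birkhoffMax_nonneg f G n (f x)
    rw [birkhoffMax_succ_sub_comp, Real.norm_eq_abs, abs_le]
    exact ⟨(neg_abs_le _).trans (le_max_right _ _),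
      max_le (by linarith [abs_nonneg (G x)]) (le_abs_self _)⟩
  have hlim := tendsto_integral_of_dominated_convergence (fun x => |G x|) hmeas hG.abs
    (fun n => .of_forall (hbound n)) (h.mono fun _ hx => tendsto_birkhoffMax_succ_sub_comp hx)
  exact ge_of_tendsto' hlim (integral_birkhoffMax_succ_sub_comp_nonneg hf hG)

theorem ae_bddAbove_birkhoffSum_of_integral_neg (hμ : Ergodic f μ) (hG : Integrable G μ)
    (hneg : ∫ x, G x ∂μ < 0) : ∀ᵐ x ∂μ, BddAbove (range fun n => birkhoffSum f G n x) := by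
  have hmeas : NullMeasurableSet {x | BddAbove (range fun n => birkhoffMax f G n x)} μ :=
    nullMeasurableSet_bddAbove_range fun n =>
      (integrable_birkhoffMax hμ.toMeasurePreserving hG n).aemeasurable
  have hinv : f ⁻¹' {x | BddAbove (range fun n => birkhoffMax f G n x)} =
      {x | BddAbove (range fun n => birkhoffMax f G n x)} :=
    Set.ext fun x => bddAbove_birkhoffMax_comp_iff f G x
  rcases hμ.quasiErgodic.ae_mem_or_ae_notMem₀ hmeas hinv.eventuallyEq with hbdd | hunbdd
  · filter_upwards [hbdd] with x hx
    exact hx.range_mono _ fun n => birkhoffSum_le_birkhoffMax f G n x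
  · exact absurd hneg
      (integral_nonneg_of_ae_not_bddAbove_birkhoffMax hμ.toMeasurePreserving hG hunbdd).not_gt

theorem ae_eventually_birkhoffSum_le [IsProbabilityMeasure μ] (hμ : Ergodic f μ)
    (hG : Integrable G μ) {a : ℝ} (ha : ∫ x, G x ∂μ < a) :
    ∀ᵐ x ∂μ, ∀ᶠ n : ℕ in atTop, birkhoffSum f G n x ≤ n * a := by
  obtain ⟨b, hGb, hba⟩ := exists_between ha
  have hneg : ∫ x, (G x - b) ∂μ < 0 := by
    rw [integral_sub hG (integrable_const b), integral_const, probReal_univ, one_smul]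
    linarith
  filter_upwards [ae_bddAbove_birkhoffSum_of_integral_neg hμ (hG.sub (integrable_const b)) hneg]
    with x ⟨K, hK⟩
  have hlarge : ∀ᶠ n : ℕ in atTop, K ≤ n * (a - b) :=
    (tendsto_natCast_atTop_atTop.atTop_mul_const (sub_pos.2 hba)).eventually_ge_atTop K
  filter_upwards [hlarge] with n hn
  have hsum : birkhoffSum f (fun y => G y - b) n x = birkhoffSum f G n x - n * b := by
    simp only [birkhoffSum, Finset.sum_sub_distrib, Finset.sum_const, Finset.card_range,
      nsmul_eq_mul]
  have hle : birkhoffSum f G n x - n * b ≤ K := hsum ▸ hK ⟨n, rfl⟩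
  linarith

end ErgodicTheorem

section ReturnTimes

variable {X : Type*} [MeasurableSpace X] {μ : Measure X} [IsFiniteMeasure μ] {f : X → X}

theorem mul_measureReal_forall_iterate_notMem_le (hf : MeasurePreserving f μ μ) {A : Set X}
    (hA : MeasurableSet A) (N : ℕ) :
    (N + 1 : ℝ) * μ.real {x ∈ A | ∀ j ∈ Icc 1 N, f^[j] x ∉ A} ≤ μ.real univ := by
  set B : Set X := {x ∈ A | ∀ j ∈ Icc 1 N, f^[j] x ∉ A} with hB
  have hBm : MeasurableSet B := by
    have : B = A ∩ ⋂ j ∈ Icc 1 N, (f^[j] ⁻¹' A)ᶜ := by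
      ext x; simp [hB]
    rw [this]
    exact hA.inter (.biInter (to_countable _) fun j _ => (hf.measurable.iterate j hA).compl)
  have hlt : ∀ {i j : ℕ}, i < j → j ≤ N → Disjoint (f^[i] ⁻¹' B) (f^[j] ⁻¹' B) := by
    refine fun {i j} hij hj => Set.disjoint_left.2 fun x hxi hxj => ?_
    refine hxi.2 (j - i) ⟨by omega, by omega⟩ ?_
    rw [← Function.iterate_add_apply, Nat.sub_add_cancel hij.le]
    exact hxj.1
  have hdisj : (↑(Finset.range (N + 1)) : Set ℕ).PairwiseDisjoint fun j => f^[j] ⁻¹' B := by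
    intro i hi j hj hij
    simp only [Finset.coe_range, mem_Iio, Nat.lt_succ_iff] at hi hj
    exact hij.lt_or_gt.elim (fun h => hlt h hj) fun h => (hlt h hi).symm
  calc (N + 1 : ℝ) * μ.real B = ∑ j ∈ Finset.range (N + 1), μ.real (f^[j] ⁻¹' B) := by
        simp [(hf.iterate _).measureReal_preimage hBm.nullMeasurableSet]
    _ = μ.real (⋃ j ∈ Finset.range (N + 1), f^[j] ⁻¹' B) :=
        (measureReal_biUnion_finset hdisj fun j _ => hf.measurable.iterate j hBm).symm
    _ ≤ μ.real univ := measureReal_mono (subset_univ _)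

theorem measureReal_forall_iterate_ne_le {β : Type*} [MeasurableSpace β]
    [MeasurableSingletonClass β] (hf : MeasurePreserving f μ μ) {Y : X → β} (hY : Measurable Y)
    (S : Finset β) (N : ℕ) :
    μ.real {x | Y x ∈ S ∧ ∀ j ∈ Icc 1 N, Y (f^[j] x) ≠ Y x} ≤
      S.card * (μ.real univ / (N + 1)) := by
  have hsub : {x | Y x ∈ S ∧ ∀ j ∈ Icc 1 N, Y (f^[j] x) ≠ Y x} ⊆
      ⋃ a ∈ S, {x ∈ Y ⁻¹' {a} | ∀ j ∈ Icc 1 N, f^[j] x ∉ Y ⁻¹' {a}} :=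
    fun x hx => mem_biUnion hx.1 ⟨rfl, hx.2⟩
  refine (measureReal_mono hsub (measure_ne_top _ _)).trans
    ((measureReal_biUnion_finset_le _ _).trans ?_)
  rw [← nsmul_eq_mul]
  refine Finset.sum_le_card_nsmul _ _ _ fun a _ => ?_
  rw [le_div_iff₀ (by positivity), mul_comm]
  exact mul_measureReal_forall_iterate_notMem_le hf (hY (measurableSet_singleton a)) N

theorem card_filter_le_mul_le_sum {β : Type*} [Fintype β] {W : β → ℝ} (hW : ∀ a, 0 ≤ W a) (t : ℝ) :
    (Finset.univ.filter fun a => t ≤ W a).card * t ≤ ∑ a, W a := by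
  calc (Finset.univ.filter fun a => t ≤ W a).card * t
      ≤ ∑ a ∈ Finset.univ.filter fun a => t ≤ W a, W a := by
        rw [← nsmul_eq_mul]
        exact Finset.card_nsmul_le_sum _ _ _ fun a ha => (Finset.mem_filter.1 ha).2
    _ ≤ ∑ a, W a := Finset.sum_le_univ_sum_of_nonneg hW

variable {β : ℕ → Type*} [∀ n, Fintype (β n)] [∀ n, MeasurableSpace (β n)]
  [∀ n, MeasurableSingletonClass (β n)]

theorem ae_eventually_exists_iterate_eq_of_weights (hf : MeasurePreserving f μ μ)
    {Y : ∀ n, X → β n} (hY : ∀ n, Measurable (Y n)) {W : ∀ n, β n → ℝ} (hW : ∀ n a, 0 ≤ W n a)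
    {C : ℝ} (hWC : ∀ n, ∑ a, W n a ≤ C) {a b : ℝ} (hab : a < b)
    (hWY : ∀ᵐ x ∂μ, ∀ᶠ n : ℕ in atTop, Real.exp (-(n * a)) ≤ W n (Y n x)) :
    ∀ᵐ x ∂μ, ∀ᶠ n : ℕ in atTop,
      ∃ j ∈ Icc 1 ⌊Real.exp (n * b)⌋₊, Y n (f^[j] x) = Y n x := by
  set S : ∀ n, Finset (β n) := fun n =>
    Finset.univ.filter fun c => Real.exp (-(n * a)) ≤ W n c
  have hcard : ∀ n, ((S n).card : ℝ) ≤ C * Real.exp (n * a) := fun n => by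
    have hmul : ((S n).card : ℝ) * Real.exp (-(n * a)) ≤ C :=
      (card_filter_le_mul_le_sum (hW n) _).trans (hWC n)
    rwa [Real.exp_neg, ← div_eq_mul_inv, div_le_iff₀ (Real.exp_pos _)] at hmul
  have hnoReturn : ∀ n : ℕ, μ.real {x | Y n x ∈ S n ∧
      ∀ j ∈ Icc 1 ⌊Real.exp (n * b)⌋₊, Y n (f^[j] x) ≠ Y n x} ≤
        C * μ.real univ * Real.exp (-(n * (b - a))) := fun n =>
    calc _ ≤ (S n).card * (μ.real univ / (⌊Real.exp (n * b)⌋₊ + 1)) :=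
          measureReal_forall_iterate_ne_le hf (hY n) (S n) _
      _ ≤ C * Real.exp (n * a) * (μ.real univ / Real.exp (n * b)) := by
          gcongr
          exacts [(Nat.cast_nonneg _).trans (hcard n), hcard n, (Nat.lt_floor_add_one _).le]
      _ = C * μ.real univ * Real.exp (-(n * (b - a))) := by
          rw [show -(n * (b - a)) = n * a - n * b by ring, Real.exp_sub]
          ring
  filter_upwards [hWY, ae_eventually_notMem_of_measureReal_le_exp (sub_pos.2 hab)
    (.of_forall hnoReturn)] with x hlarge hreturn
  filter_upwards [hlarge, hreturn] with n hn hxn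
  by_contra! hne
  exact hxn ⟨Finset.mem_filter.2 ⟨Finset.mem_univ _, hn⟩, hne⟩

end ReturnTimes

section MarkovWeights

variable {X α : Type*}

/-- The word `P x, P (f x), …, P (f^[n-1] x)` naming the element of the refined partition
`Q^{(n)}` that contains `x`, where `Q` is encoded by `P`. -/
def itinerary (f : X → X) (P : X → α) (n : ℕ) (x : X) : Fin n → α :=
  fun i => P (f^[i] x)

theorem tail_itinerary_succ (f : X → X) (P : X → α) (n : ℕ) (x : X) :
    Fin.tail (itinerary f P (n + 1) x) = itinerary f P n (f x) :=
  rfl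

theorem measurable_itinerary [MeasurableSpace X] [MeasurableSpace α] {f : X → X} {P : X → α}
    (hf : Measurable f) (hP : Measurable P) (n : ℕ) : Measurable (itinerary f P n) :=
  measurable_pi_lambda _ fun i => hP.comp (hf.iterate i)

/-- The product of the transition weights `q` over the `n` windows of length `k + 1` of a word of
length `k + n`: the weight of prepending `n` letters to the last `k` ones when `q` is the
conditional probability of a letter given the next `k` letters. -/
def markovWeight {k : ℕ} (q : (Fin (k + 1) → α) → ℝ) : (n : ℕ) → (Fin (k + n) → α) → ℝ
  | 0, _ => 1
  | n + 1, a => q (Fin.take (k + 1) (by omega) a) * markovWeight q n (Fin.tail (n := k + n) a)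

variable {k : ℕ} {q : (Fin (k + 1) → α) → ℝ}

theorem markovWeight_nonneg (hq : ∀ c, 0 ≤ q c) (n : ℕ) (a : Fin (k + n) → α) :
    0 ≤ markovWeight q n a := by
  induction n with
  | zero => exact zero_le_one
  | succ n ih => exact mul_nonneg (hq _) (ih _)

theorem markovWeight_cons (n : ℕ) (b : α) (a : Fin (k + n) → α) :
    markovWeight q (n + 1) (Fin.cons b a : Fin (k + n + 1) → α) =
      q (Fin.cons b (Fin.take k (k.le_add_right n) a)) * markovWeight q n a := by
  have htake : Fin.take (k + 1) (by omega) (Fin.cons b a : Fin (k + n + 1) → α) =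
      Fin.cons b (Fin.take k (k.le_add_right n) a) := by
    ext i
    cases i using Fin.cases <;> rfl
  rw [← htake]
  rfl

theorem sum_markovWeight_le [Fintype α] (hq : ∀ c, 0 ≤ q c)
    (hsum : ∀ c : Fin k → α, ∑ b, q (Fin.cons b c) ≤ 1) (n : ℕ) :
    ∑ a, markovWeight q n a ≤ (Fintype.card α : ℝ) ^ k := by
  induction n with
  | zero => simp [markovWeight]
  | succ n ih =>
    calc ∑ a, markovWeight q (n + 1) a
        = ∑ c : α × (Fin (k + n) → α),
            markovWeight q (n + 1) (Fin.cons c.1 c.2 : Fin (k + n + 1) → α) :=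
          ((Fin.consEquiv (n := k + n) fun _ => α).sum_comp (markovWeight q (n + 1))).symm
      _ = ∑ a : Fin (k + n) → α, ∑ b,
            markovWeight q (n + 1) (Fin.cons b a : Fin (k + n + 1) → α) := by
          rw [Fintype.sum_prod_type, Finset.sum_comm]
      _ = ∑ a, (∑ b, q (Fin.cons b (Fin.take k (k.le_add_right n) a))) * markovWeight q n a := by
          simp only [markovWeight_cons, Finset.sum_mul]
      _ ≤ ∑ a, markovWeight q n a := Finset.sum_le_sum fun a _ =>
          mul_le_of_le_one_left (markovWeight_nonneg hq n a) (hsum _)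
      _ ≤ (Fintype.card α : ℝ) ^ k := ih

theorem markovWeight_itinerary (f : X → X) (P : X → α) (n : ℕ) (x : X) :
    markovWeight q n (itinerary f P (k + n) x) =
      ∏ i ∈ Finset.range n, q (itinerary f P (k + 1) (f^[i] x)) := by
  induction n generalizing x with
  | zero => rfl
  | succ n ih =>
    have hrec : markovWeight q (n + 1) (itinerary f P (k + (n + 1)) x) =
        q (itinerary f P (k + 1) x) * markovWeight q n (itinerary f P (k + n) (f x)) := rfl
    rw [hrec, ih, Finset.prod_range_succ', mul_comm]
    rfl

theorem markovWeight_itinerary_eq_exp {f : X → X} {P : X → α} {x : X}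
    (hx : ∀ i, 0 < q (itinerary f P (k + 1) (f^[i] x))) (n : ℕ) :
    markovWeight q n (itinerary f P (k + n) x) =
      Real.exp (-birkhoffSum f (fun y => -Real.log (q (itinerary f P (k + 1) y))) n x) := by
  simp only [markovWeight_itinerary, birkhoffSum, Finset.sum_neg_distrib, neg_neg, Real.exp_sum,
    Real.exp_log (hx _)]

end MarkovWeights

section WordProbabilities

variable {X α : Type*} [MeasurableSpace X]

/-- The measure of the element of the refined partition `Q^{(n)}` named by the word `a`. -/
noncomputable def wordProb (μ : Measure X) (f : X → X) (P : X → α) (n : ℕ) (a : Fin n → α) : ℝ :=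
  μ.real (itinerary f P n ⁻¹' {a})

/-- The conditional probability of the first letter of `c` given its last `k` letters; it is `0`
when the word formed by the latter has probability `0`. -/
noncomputable def condWordProb (μ : Measure X) (f : X → X) (P : X → α) (k : ℕ)
    (c : Fin (k + 1) → α) : ℝ :=
  wordProb μ f P (k + 1) c / wordProb μ f P k (Fin.tail c)

theorem condWordProb_nonneg (μ : Measure X) (f : X → X) (P : X → α) (k : ℕ)
    (c : Fin (k + 1) → α) : 0 ≤ condWordProb μ f P k c :=
  div_nonneg measureReal_nonneg measureReal_nonneg

variable {μ : Measure X} [IsFiniteMeasure μ] {f : X → X} {P : X → α}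

section

variable [Fintype α] [MeasurableSpace α] [MeasurableSingletonClass α]

theorem sum_wordProb_cons (hf : MeasurePreserving f μ μ) (hP : Measurable P) (n : ℕ)
    (a : Fin n → α) : ∑ b, wordProb μ f P (n + 1) (Fin.cons b a) = wordProb μ f P n a := by
  have hmeas := measurable_itinerary hf.measurable hP
  have hunion : ⋃ b ∈ (Finset.univ : Finset α),
      itinerary f P (n + 1) ⁻¹' {(Fin.cons b a : Fin (n + 1) → α)} =
        f ⁻¹' (itinerary f P n ⁻¹' {a}) := by
    ext x
    simp only [Finset.mem_univ, iUnion_true, mem_iUnion, mem_preimage, mem_singleton_iff,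
      ← tail_itinerary_succ]
    refine ⟨?_, fun h => ⟨itinerary f P (n + 1) x 0, ?_⟩⟩
    · rintro ⟨b, hb⟩
      rw [hb, Fin.tail_cons]
    · rw [← h, Fin.cons_self_tail]
  have hdisj : (↑(Finset.univ : Finset α) : Set α).PairwiseDisjoint fun b =>
      itinerary f P (n + 1) ⁻¹' {(Fin.cons b a : Fin (n + 1) → α)} := fun b _ c _ hbc =>
    Disjoint.preimage _ (disjoint_singleton.2 fun h =>
      hbc (Fin.cons_left_injective (α := fun _ => α) a h))
  simp only [wordProb]
  rw [← measureReal_biUnion_finset hdisj fun b _ => hmeas _ (measurableSet_singleton _), hunion,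
    hf.measureReal_preimage (hmeas n (measurableSet_singleton a)).nullMeasurableSet]

theorem sum_condWordProb_cons_le_one (hf : MeasurePreserving f μ μ) (hP : Measurable P) (k : ℕ)
    (c : Fin k → α) : ∑ b, condWordProb μ f P k (Fin.cons b c) ≤ 1 := by
  simp only [condWordProb, Fin.tail_cons]
  rw [← Finset.sum_div, sum_wordProb_cons hf hP]
  exact div_self_le_one _

end

theorem ae_wordProb_itinerary_pos [Finite α] (μ : Measure X) [IsFiniteMeasure μ] (f : X → X)
    (P : X → α) (n : ℕ) : ∀ᵐ x ∂μ, 0 < wordProb μ f P n (itinerary f P n x) :=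
  ae_measureReal_preimage_singleton_pos _

theorem ae_condWordProb_itinerary_pos [Finite α] (hf : MeasurePreserving f μ μ) (P : X → α)
    (k : ℕ) : ∀ᵐ x ∂μ, 0 < condWordProb μ f P k (itinerary f P (k + 1) x) := by
  filter_upwards [ae_wordProb_itinerary_pos μ f P (k + 1),
    hf.quasiMeasurePreserving.ae (ae_wordProb_itinerary_pos μ f P k)] with x hword htail
  exact div_pos hword htail

end WordProbabilities

section PartitionEntropy

variable {X : Type*}

theorem cylReturn_le_of_itinerary_eq {f : X → X} {m : ℕ} {P : X → Fin m} {g : ℕ → ℕ}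
    {n j : ℕ} {x : X} (hj : 1 ≤ j) (h : itinerary f P n (f^[j] x) = itinerary f P n x) :
    cylReturn f P g n x ≤ j :=
  Nat.sInf_le ⟨hj, Finset.range n, subset_rfl, by simp, fun i hi =>
    congrFun h ⟨i, Finset.mem_range.1 hi⟩⟩

variable [MeasurableSpace X] {μ : Measure X} {f : X → X} {m : ℕ} {P : X → Fin m}

theorem refinedEntropy_eq_sum_negMulLog_wordProb (μ : Measure X) (f : X → X) (P : X → Fin m)
    (n : ℕ) : refinedEntropy μ f P n = ∑ a, Real.negMulLog (wordProb μ f P n a) := by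
  have hset : ∀ a : Fin n → Fin m,
      {x | ∀ i : Fin n, P (f^[(i : ℕ)] x) = a i} = itinerary f P n ⁻¹' {a} :=
    fun a => Set.ext fun x => funext_iff.symm
  simp only [refinedEntropy, wordProb, hset, measureReal_def]

theorem integral_log_wordProb [IsFiniteMeasure μ] (hf : Measurable f) (hP : Measurable P) (n : ℕ) :
    ∫ x, Real.log (wordProb μ f P n (itinerary f P n x)) ∂μ = -refinedEntropy μ f P n := by
  rw [integral_comp_eq_sum_measureReal_preimage (measurable_itinerary hf hP n)
      fun a => Real.log (wordProb μ f P n a),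
    refinedEntropy_eq_sum_negMulLog_wordProb, ← Finset.sum_neg_distrib]
  simp only [Real.negMulLog, wordProb, smul_eq_mul, neg_mul, neg_neg]

theorem integral_neg_log_condWordProb [IsFiniteMeasure μ] (hf : MeasurePreserving f μ μ)
    (hP : Measurable P) (k : ℕ) :
    ∫ x, -Real.log (condWordProb μ f P k (itinerary f P (k + 1) x)) ∂μ =
      refinedEntropy μ f P (k + 1) - refinedEntropy μ f P k := by
  have hint : ∀ n, Integrable (fun x => Real.log (wordProb μ f P n (itinerary f P n x))) μ :=
    fun n => integrable_comp_of_finite (measurable_itinerary hf.measurable hP n)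
      fun a => Real.log (wordProb μ f P n a)
  have hsplit : (fun x => -Real.log (condWordProb μ f P k (itinerary f P (k + 1) x))) =ᵐ[μ]
      fun x => Real.log (wordProb μ f P k (itinerary f P k (f x))) -
        Real.log (wordProb μ f P (k + 1) (itinerary f P (k + 1) x)) := by
    filter_upwards [ae_wordProb_itinerary_pos μ f P (k + 1),
      hf.quasiMeasurePreserving.ae (ae_wordProb_itinerary_pos μ f P k)] with x hword htail
    rw [condWordProb, tail_itinerary_succ, Real.log_div hword.ne' htail.ne', neg_sub]
  have hcomp : Integrable
      (fun x => Real.log (wordProb μ f P k (itinerary f P k (f x)))) μ :=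
    hf.integrable_comp_of_integrable (hint k)
  rw [integral_congr_ae hsplit, integral_sub hcomp (hint (k + 1)),
    integral_comp_eq_of_measurePreserving hf (hint k).aestronglyMeasurable,
    integral_log_wordProb hf.measurable hP, integral_log_wordProb hf.measurable hP]
  ring

theorem partitionEntropy_nonneg [IsProbabilityMeasure μ] : 0 ≤ partitionEntropy μ f P :=
  Real.iInf_nonneg fun _ => div_nonneg
    (Finset.sum_nonneg fun _ _ => Real.negMulLog_nonneg ENNReal.toReal_nonneg measureReal_le_one)
    (by positivity)

theorem exists_refinedEntropy_succ_sub_lt [IsProbabilityMeasure μ] {a : ℝ}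
    (ha : partitionEntropy μ f P < a) :
    ∃ k, refinedEntropy μ f P (k + 1) - refinedEntropy μ f P k < a := by
  obtain ⟨n, hn⟩ := exists_lt_of_ciInf_lt ha
  by_contra! hincr
  have hzero : refinedEntropy μ f P 0 = 0 := by simp [refinedEntropy]
  have hlinear : ∀ j : ℕ, j * a ≤ refinedEntropy μ f P j := by
    intro j
    induction j with
    | zero => simp [hzero]
    | succ j ih => push_cast; linarith [hincr j]
  rw [div_lt_iff₀ (by positivity), mul_comm] at hn
  exact_mod_cast (hlinear (n + 1)).not_gt (by exact_mod_cast hn)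

theorem ae_eventually_exp_le_markovWeight [IsProbabilityMeasure μ] (hμ : Ergodic f μ)
    (hP : Measurable P) {k : ℕ} {a : ℝ}
    (ha : refinedEntropy μ f P (k + 1) - refinedEntropy μ f P k < a) :
    ∀ᵐ x ∂μ, ∀ᶠ n : ℕ in atTop, Real.exp (-(n * a)) ≤
      markovWeight (condWordProb μ f P k) n (itinerary f P (k + n) x) := by
  have hf := hμ.toMeasurePreserving
  have hint : Integrable
      (fun x => -Real.log (condWordProb μ f P k (itinerary f P (k + 1) x))) μ :=
    integrable_comp_of_finite (measurable_itinerary hf.measurable hP (k + 1))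
      fun c => -Real.log (condWordProb μ f P k c)
  rw [← integral_neg_log_condWordProb hf hP] at ha
  have hpos : ∀ᵐ x ∂μ, ∀ i, 0 < condWordProb μ f P k (itinerary f P (k + 1) (f^[i] x)) :=
    ae_all_iff.2 fun i =>
      (hf.iterate i).quasiMeasurePreserving.ae (ae_condWordProb_itinerary_pos hf P k)
  filter_upwards [ae_eventually_birkhoffSum_le hμ hint ha, hpos] with x hsum hx
  filter_upwards [hsum] with n hn
  rw [markovWeight_itinerary_eq_exp hx]
  gcongr

theorem ae_eventually_exists_itinerary_return [IsProbabilityMeasure μ] (hμ : Ergodic f μ)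
    (hP : Measurable P) {b : ℝ} (hb : partitionEntropy μ f P < b) :
    ∀ᵐ x ∂μ, ∀ᶠ n : ℕ in atTop,
      ∃ j ∈ Icc 1 ⌊Real.exp (n * b)⌋₊, itinerary f P n (f^[j] x) = itinerary f P n x := by
  have hf := hμ.toMeasurePreserving
  obtain ⟨a, ha, hab⟩ := exists_between hb
  have hb_nonneg : 0 ≤ b := partitionEntropy_nonneg.trans hb.le
  obtain ⟨k, hk⟩ := exists_refinedEntropy_succ_sub_lt ha
  have hq := condWordProb_nonneg μ f P k
  filter_upwards [ae_eventually_exists_iterate_eq_of_weights hf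
    (fun n => measurable_itinerary hf.measurable hP (k + n)) (markovWeight_nonneg hq)
    (sum_markovWeight_le hq (sum_condWordProb_cons_le_one hf hP k)) hab
    (ae_eventually_exp_le_markovWeight hμ hP hk)] with x hx
  rw [← map_add_atTop_eq_nat k, eventually_map]
  filter_upwards [hx] with n ⟨j, hj, hreturn⟩
  rw [Nat.add_comm n k]
  refine ⟨j, Icc_subset_Icc_right (Nat.floor_le_floor ?_) hj, hreturn⟩
  gcongr
  exact Nat.le_add_left n k

theorem ae_eventually_cylReturn_le [IsProbabilityMeasure μ] (hμ : Ergodic f μ)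
    (hP : Measurable P) (g : ℕ → ℕ) {b : ℝ} (hb : partitionEntropy μ f P < b) :
    ∀ᵐ x ∂μ, ∀ᶠ n : ℕ in atTop, cylReturn f P g n x ≤ ⌊Real.exp (n * b)⌋₊ := by
  filter_upwards [ae_eventually_exists_itinerary_return hμ hP hb] with x hx
  filter_upwards [hx] with n ⟨j, hj, hreturn⟩
  exact (cylReturn_le_of_itinerary_eq hj.1 hreturn).trans hj.2

end PartitionEntropy

section WeightedSums

variable {X : Type*} [MeasurableSpace X] {μ : Measure X} {f : X → X}

theorem measureReal_le_birkhoffSum_le (hf : MeasurePreserving f μ μ) {w : X → ℝ}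
    (hw : Integrable w μ) (hw_nonneg : ∀ x, 0 ≤ w x) (N : ℕ) {t : ℝ} (ht : 0 < t) :
    μ.real {x | t ≤ birkhoffSum f w N x} ≤ N * (∫ x, w x ∂μ) / t := by
  rw [le_div_iff₀' ht, ← nsmul_eq_mul, ← integral_birkhoffSum hf hw]
  exact mul_meas_ge_le_integral_of_nonneg
    (.of_forall fun x => Finset.sum_nonneg fun i _ => hw_nonneg _)
    (integrable_birkhoffSum hf hw N) t

theorem floor_exp_add_one_le {s : ℝ} (hs : 0 ≤ s) : (⌊Real.exp s⌋₊ + 1 : ℝ) ≤ 2 * Real.exp s := by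
  linarith [Nat.floor_le (Real.exp_pos s).le, Real.one_le_exp hs]

theorem ae_eventually_birkhoffSum_lt_exp [IsFiniteMeasure μ] (hf : MeasurePreserving f μ μ)
    {w : ℕ → X → ℝ} (hw : ∀ n, Integrable (w n) μ) (hw_nonneg : ∀ n x, 0 ≤ w n x) {β γ b : ℝ}
    (hβ : 0 ≤ β) (hwγ : ∀ᶠ n : ℕ in atTop, ∫ x, w n x ∂μ ≤ Real.exp (n * γ)) (hb : β + γ < b) :
    ∀ᵐ x ∂μ, ∀ᶠ n : ℕ in atTop,
      birkhoffSum f (w n) (⌊Real.exp (n * β)⌋₊ + 1) x < Real.exp (n * b) := by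
  have hlarge : ∀ᶠ n : ℕ in atTop,
      μ.real {x | Real.exp (n * b) ≤ birkhoffSum f (w n) (⌊Real.exp (n * β)⌋₊ + 1) x} ≤
        2 * Real.exp (-(n * (b - (β + γ)))) := by
    filter_upwards [hwγ] with n hn
    calc _ ≤ (⌊Real.exp (n * β)⌋₊ + 1 : ℕ) * (∫ x, w n x ∂μ) / Real.exp (n * b) :=
          measureReal_le_birkhoffSum_le hf (hw n) (hw_nonneg n) _ (Real.exp_pos _)
      _ ≤ 2 * Real.exp (n * β) * Real.exp (n * γ) / Real.exp (n * b) := by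
          push_cast
          gcongr
          exacts [integral_nonneg (hw_nonneg n), floor_exp_add_one_le (by positivity)]
      _ = 2 * Real.exp (-(n * (b - (β + γ)))) := by
          rw [mul_assoc, ← Real.exp_add, mul_div_assoc, ← Real.exp_sub]
          ring_nf
  filter_upwards [ae_eventually_notMem_of_measureReal_le_exp (sub_pos.2 hb) hlarge] with x hx
  exact hx.mono fun n hn => not_le.1 hn

end WeightedSums

section FreeEnergy

variable {X : Type*} {f : X → X} {Φ : ℕ → X → ℝ} {K : ℝ}

theorem exp_neg_le_birkhoffSum_succ (hK : ∀ n x, |Φ n x| ≤ n * K) (n N : ℕ) (x : X) :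
    Real.exp (-(n * K)) ≤ birkhoffSum f (fun y => Real.exp (Φ n y)) (N + 1) x :=
  calc Real.exp (-(n * K)) ≤ Real.exp (Φ n x) := Real.exp_le_exp.2 (abs_le.1 (hK n x)).1
    _ = birkhoffSum f (fun y => Real.exp (Φ n y)) 1 x :=
        (birkhoffSum_one f (fun y => Real.exp (Φ n y)) x).symm
    _ ≤ _ := birkhoffSum_mono_of_nonneg (fun _ => (Real.exp_pos _).le) (by omega) x

variable [MeasurableSpace X] {μ : Measure X}

theorem integrable_exp_of_abs_le [IsFiniteMeasure μ] {ψ : X → ℝ} (hψ : AEMeasurable ψ μ) {C : ℝ}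
    (hC : ∀ x, |ψ x| ≤ C) : Integrable (fun x => Real.exp (ψ x)) μ := by
  refine .of_bound (Real.measurable_exp.comp_aemeasurable hψ).aestronglyMeasurable (Real.exp C)
    (.of_forall fun x => ?_)
  rw [Real.norm_of_nonneg (Real.exp_pos _).le]
  exact Real.exp_le_exp.2 (abs_le.1 (hC x)).2

theorem eventually_integral_exp_le [IsProbabilityMeasure μ] (hΦ : ∀ n, AEMeasurable (Φ n) μ)
    (hK : ∀ n x, |Φ n x| ≤ n * K) {b : ℝ}
    (hb : limsup (fun n : ℕ => Real.log (∫ x, Real.exp (Φ n x) ∂μ) / n) atTop < b) :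
    ∀ᶠ n : ℕ in atTop, ∫ x, Real.exp (Φ n x) ∂μ ≤ Real.exp (n * b) := by
  have hint := fun n => integrable_exp_of_abs_le (hΦ n) (hK n)
  refine eventually_le_exp_of_limsup_log_div_lt (fun n => integral_exp_pos (hint n))
    (K := K) (fun n => ?_) hb
  calc ∫ x, Real.exp (Φ n x) ∂μ ≤ ∫ _, Real.exp (n * K) ∂μ :=
        integral_mono (hint n) (integrable_const _) fun x => Real.exp_le_exp.2 (abs_le.1 (hK n x)).2
    _ = Real.exp (n * K) := by rw [integral_const, probReal_univ, one_smul]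

theorem weighted_first_return_rate_le_general [IsProbabilityMeasure μ] (hμ : Ergodic f μ)
    (hΦ : ∀ n, AEMeasurable (Φ n) μ) (hK : ∀ n x, |Φ n x| ≤ n * K)
    {m : ℕ} {P : X → Fin m} (hP : Measurable P) (g : ℕ → ℕ) :
    ∀ᵐ x ∂μ,
      limsup (fun n : ℕ => Real.log
          (birkhoffSum f (fun y => Real.exp (Φ n y)) (cylReturn f P g n x + 1) x) / n) atTop ≤
        partitionEntropy μ f P +
          limsup (fun n : ℕ => Real.log (∫ y, Real.exp (Φ n y) ∂μ) / n) atTop := by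
  refine ae_le_const_of_forall_gt fun b hb => ?_
  obtain ⟨β, hβ, hβb⟩ := exists_between (lt_sub_iff_add_lt.2 hb)
  obtain ⟨γ, hγ, hγb⟩ := exists_between (lt_sub_comm.1 hβb)
  have hβγ : β + γ < b := lt_sub_iff_add_lt'.1 hγb
  have hβ_nonneg : 0 ≤ β := partitionEntropy_nonneg.trans hβ.le
  have hexp_nonneg : ∀ n x, 0 ≤ Real.exp (Φ n x) := fun n x => (Real.exp_pos _).le
  filter_upwards [ae_eventually_cylReturn_le hμ hP g hβ,
    ae_eventually_birkhoffSum_lt_exp hμ.toMeasurePreserving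
      (fun n => integrable_exp_of_abs_le (hΦ n) (hK n)) hexp_nonneg hβ_nonneg
      (eventually_integral_exp_le hΦ hK hγ) hβγ] with x hreturn hsum
  refine limsup_log_div_le (fun n => exp_neg_le_birkhoffSum_succ hK n _ x) ?_
  filter_upwards [hreturn, hsum] with n hn hlt
  exact (birkhoffSum_mono_of_nonneg (hexp_nonneg n) (by omega) x).trans hlt.le

end FreeEnergy

/-- **Upper bound via the free energy (first return times).** For an ergodic `μ`, a
continuous potential `φ`, a finite measurable partition `Q` and a mistake function `g`,
for `μ`-a.e. `x`:
`limsup_n (1/n) log [Σ_{j=0}^{R_n(g;x,Q)} e^{S_nφ(f^j x)}] ≤ h_μ(f,Q) + c_{φ,1}`,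
where `c_{φ,1} = limsup_n (1/n) log ∫ e^{S_nφ} dμ`. -/
theorem weighted_first_return_rate_le {X : Type*} [MetricSpace X] [CompactSpace X]
    [MeasurableSpace X] [BorelSpace X] {f : X → X} (hf : Continuous f)
    {μ : Measure X} [IsProbabilityMeasure μ] (hμ : Ergodic f μ)
    {φ : X → ℝ} (hφ : Continuous φ)
    {m : ℕ} {P : X → Fin m} (hP : Measurable P)
    {g : ℕ → ℕ} (hgmono : ∀ n, g n ≤ g (n + 1))
    (hgsub : Tendsto (fun n : ℕ => (g n : ℝ) / n) atTop (nhds 0)) :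
    ∀ᵐ x ∂μ,
      limsup (fun n : ℕ =>
          Real.log (∑ j ∈ Finset.range (cylReturn f P g n x + 1),
            Real.exp (∑ i ∈ Finset.range n, φ (f^[i] (f^[j] x)))) / n) atTop ≤
        partitionEntropy μ f P +
          limsup (fun n : ℕ =>
            Real.log (∫ y, Real.exp (∑ i ∈ Finset.range n, φ (f^[i] y)) ∂μ) / n)
            atTop := by
  obtain ⟨K, hK⟩ := isCompact_univ.exists_bound_of_continuousOn hφ.continuousOn
  exact weighted_first_return_rate_le_general hμ
    (fun n => (measurable_birkhoffSum hf.measurable hφ.measurable n).aemeasurable)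
    (norm_birkhoffSum_le fun x => hK x (mem_univ x)) hP g
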